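/- Let a, b be integers with (a,b) ≠ (0,0), let p be an odd prime that is a 0-Pisano-Legendre prime relative to (a,b) with p ≡ ±1 (mod 8), let q ≥ 1 be an integer, and let G be a connected graph. Then the lexicographic product graph C_{qπ_p(a,b)} ⊗ G is an (a,b)-Fibonacci-Legendre cordial graph modulo p. -/

import Mathlib

/-!
Label the vertex `(i, v)` of `C_N ⊗ G`, `N = q π`, by `i + N · idx v`. Modulo `p` its Fibonacci
value is then `F i`, so the label of an edge depends only on the cycle coordinates. An edge inside
a copy of `G` at position `i` is governed by `2 F i`, which has the same Legendre symbol as `F i`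
because `2` is a square modulo `p ≡ ±1 (mod 8)`; an edge over the cycle edge `i, i + 1` is governed
by `F i + F (i + 1) = F (i + 2)`. As `p` is a `0`-PL prime, the signed labels of `F` cancel over a
period (`sum_flcSign_period`), hence in each of the two families of edges, and `e(0) = e(1)`.

The difference `e(1) - e(0)` is computed by summing signed labels over ordered adjacent pairs
(`two_mul_flcCount_sub`), and `sum_lexProd_cycle_eq_zero` separates the families. The latter needs
`N ≥ 3`, since the formal cycle on one or two vertices is degenerate; `three_le_pisano` provides it.
-/

noncomputable section

/-- The `(a,b)`-Fibonacci sequence: `F 0 = a`, `F 1 = b`, `F (n+2) = F n + F (n+1)`. -/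
def fibAB (a b : ℤ) : ℕ → ℤ
  | 0 => a
  | 1 => b
  | n + 2 => fibAB a b n + fibAB a b (n + 1)

/-- The `(a,b)`-Pisano period of `p`: the least positive `k` with
`F (n + k) ≡ F n (mod p)` for all `n`. -/
def pisanoAB (a b : ℤ) (p : ℕ) : ℕ :=
  sInf {k : ℕ | 0 < k ∧ ∀ n : ℕ, fibAB a b (n + k) ≡ fibAB a b n [ZMOD (p : ℤ)]}

/-- `Λ_j^p(a,b)`: the indices `ξ ∈ {0, …, π_p(a,b) - 1}` with `(F_ξ / p) = j`,
where (for odd prime `p`) the Legendre symbol is given by `jacobiSym`. -/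
def LambdaSet (a b : ℤ) (p : ℕ) (j : ℤ) : Finset ℕ :=
  (Finset.range (pisanoAB a b p)).filter fun ξ => jacobiSym (fibAB a b ξ) p = j

/-- `p` is a `k`-Pisano–Legendre prime relative to `(a,b)`. -/
def IsPLPrime (a b : ℤ) (p : ℕ) (k : ℤ) : Prop :=
  k = ((LambdaSet a b p 1).card : ℤ) - ((LambdaSet a b p (-1)).card : ℤ)
      - ((LambdaSet a b p 0).card : ℤ)

/-- `χ(a,b)`: the set of integers `k` for which some odd prime is a `k`-PL prime
relative to `(a,b)`. -/
def chiSet (a b : ℤ) : Set ℤ :=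
  {k | ∃ p : ℕ, p.Prime ∧ Odd p ∧ IsPLPrime a b p k}

/-- The order of apparition `z(p)` of `p` in the classical Fibonacci sequence. -/
def apparition (p : ℕ) : ℕ :=
  sInf {n : ℕ | 0 < n ∧ (p : ℤ) ∣ fibAB 0 1 n}

/-- The induced edge label `f_p*` on an unordered pair of vertex labels. -/
def flcEdgeLabel (a b : ℤ) (p : ℕ) : Sym2 ℕ → ℕ :=
  Sym2.lift ⟨fun x y =>
    if (p : ℤ) ∣ (fibAB a b x + fibAB a b y) then 0
    else (1 + jacobiSym (fibAB a b x + fibAB a b y) p).toNat / 2,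
    fun x y => by dsimp only; rw [add_comm (fibAB a b x) (fibAB a b y)]⟩

/-- The number of edges of `G` receiving label `i` under the vertex labeling `f`. -/
def flcCount {V : Type*} (G : SimpleGraph V) (a b : ℤ) (p : ℕ) (f : V → ℕ) (i : ℕ) : ℕ :=
  {e ∈ G.edgeSet | flcEdgeLabel a b p (e.map f) = i}.ncard

/-- `G` is an `(a,b)`-Fibonacci–Legendre cordial graph modulo `p`: there is a bijective
vertex labeling by `{0, …, |V| - 1}` with `|e(0) - e(1)| ≤ 1`. -/
def IsFLCGraph {V : Type*} [Fintype V] (G : SimpleGraph V) (a b : ℤ) (p : ℕ) : Prop :=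
  ∃ f : V ≃ Fin (Fintype.card V),
    |(flcCount G a b p (fun v => ((f v : Fin (Fintype.card V)) : ℕ)) 0 : ℤ) -
      (flcCount G a b p (fun v => ((f v : Fin (Fintype.card V)) : ℕ)) 1 : ℤ)| ≤ 1

/-- The path graph on `n` vertices. -/
def pathG (n : ℕ) : SimpleGraph (Fin n) :=
  SimpleGraph.fromRel fun i j => (i : ℕ) + 1 = (j : ℕ)

/-- The cycle graph on `n` vertices: the path graph plus the edge between the
first and last vertex. -/
def cycleG (n : ℕ) : SimpleGraph (Fin n) :=
  SimpleGraph.fromRel fun i j => (i : ℕ) + 1 = (j : ℕ) ∨ ((i : ℕ) = 0 ∧ (j : ℕ) = n - 1)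

/-- The star graph on `n` vertices with central vertex `0`. -/
def starG (n : ℕ) : SimpleGraph (Fin n) :=
  SimpleGraph.fromRel fun i _ => (i : ℕ) = 0

/-- The wheel graph on `n` vertices: hub `0` joined to every vertex of the cycle on
`1, …, n-1`. -/
def wheelG (n : ℕ) : SimpleGraph (Fin n) :=
  SimpleGraph.fromRel fun i j =>
    (i : ℕ) = 0 ∨ (i : ℕ) + 1 = (j : ℕ) ∨ ((i : ℕ) = 1 ∧ (j : ℕ) = n - 1)

/-- Lexicographic product of graphs. -/
def lexProd {α β : Type*} (G : SimpleGraph α) (H : SimpleGraph β) : SimpleGraph (α × β) :=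
  SimpleGraph.fromRel fun x y => G.Adj x.1 y.1 ∨ (x.1 = y.1 ∧ H.Adj x.2 y.2)

/-- Cartesian product of graphs. -/
def cartProd {α β : Type*} (G : SimpleGraph α) (H : SimpleGraph β) : SimpleGraph (α × β) :=
  SimpleGraph.fromRel fun x y => (x.1 = y.1 ∧ H.Adj x.2 y.2) ∨ (x.2 = y.2 ∧ G.Adj x.1 y.1)

/-- Tensor product of graphs. -/
def tensorProd {α β : Type*} (G : SimpleGraph α) (H : SimpleGraph β) : SimpleGraph (α × β) :=
  SimpleGraph.fromRel fun x y => G.Adj x.1 y.1 ∧ H.Adj x.2 y.2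

/-- Strong product of graphs: union of the cartesian and tensor products. -/
def strongProd {α β : Type*} (G : SimpleGraph α) (H : SimpleGraph β) : SimpleGraph (α × β) :=
  cartProd G H ⊔ tensorProd G H

/-- Join of two graphs: both graphs together with all edges between them. -/
def joinG {α β : Type*} (G : SimpleGraph α) (H : SimpleGraph β) : SimpleGraph (α ⊕ β) :=
  SimpleGraph.fromRel fun x y =>
    match x, y with
    | Sum.inl u, Sum.inl v => G.Adj u v
    | Sum.inr u, Sum.inr v => H.Adj u v
    | Sum.inl _, Sum.inr _ => True
    | Sum.inr _, Sum.inl _ => True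

/-- Corona `G ∘ H`: one copy of `G`, a copy of `H` for each vertex of `G`, and the
`u`-th vertex of `G` joined to every vertex of the `u`-th copy of `H`. -/
def coronaG {α β : Type*} (G : SimpleGraph α) (H : SimpleGraph β) :
    SimpleGraph (α ⊕ α × β) :=
  SimpleGraph.fromRel fun x y =>
    match x, y with
    | Sum.inl u, Sum.inl v => G.Adj u v
    | Sum.inr (u, s), Sum.inr (v, t) => u = v ∧ H.Adj s t
    | Sum.inl u, Sum.inr (v, _) => u = v
    | Sum.inr (u, _), Sum.inl v => u = v

/-- Disjoint union of a family of graphs on a common vertex type. -/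
def unionFam {ι V : Type*} (Gs : ι → SimpleGraph V) : SimpleGraph (ι × V) :=
  SimpleGraph.fromRel fun x y => x.1 = y.1 ∧ (Gs x.1).Adj x.2 y.2

/-! ### Signed edge counts -/

/-- The signed label of an integer modulo `p`: `1` for a nonzero quadratic residue and `-1`
otherwise. Multiples of `p` get `-1`, matching the edge label `0` they receive. -/
def flcSign (p : ℕ) (z : ℤ) : ℤ := if jacobiSym z p = 1 then 1 else -1

/-- Summing a function of unordered pairs over all ordered adjacent pairs counts every edge twice. -/
lemma sum_adj_eq_two_mul_sum_edges {W : Type*} [Fintype W] (G : SimpleGraph W)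
    [DecidableRel G.Adj] [DecidableEq W] (w : Sym2 W → ℤ) :
    ∑ x : W × W, (if G.Adj x.1 x.2 then w s(x.1, x.2) else 0)
      = 2 * ∑ e ∈ G.edgeFinset, w e := by
  rw [← Finset.sum_filter]
  have h1 : ∑ x ∈ Finset.univ.filter (fun x : W × W => G.Adj x.1 x.2), w s(x.1, x.2)
      = ∑ d : G.Dart, w d.edge := by
    symm
    refine Finset.sum_bij' (fun d _ => (d.fst, d.snd))
      (fun xy h => ⟨xy, (Finset.mem_filter.1 h).2⟩) ?_ ?_ ?_ ?_ ?_ <;> simp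
    intro d
    rfl
  rw [h1, ← Finset.sum_fiberwise_of_maps_to (s := Finset.univ) (t := G.edgeFinset)
    (g := fun d : G.Dart => d.edge) (by intro d _; simp), Finset.mul_sum]
  refine Finset.sum_congr rfl fun e he => ?_
  rw [Finset.sum_congr rfl (g := fun _ => w e)
    (by intro d hd; rw [(Finset.mem_filter.1 hd).2]), Finset.sum_const,
    G.dart_edge_fiber_card e (by simpa using he)]
  simp

lemma jacobiSym_congr {p : ℕ} {x y : ℤ} (h : x ≡ y [ZMOD (p : ℤ)]) :
    jacobiSym x p = jacobiSym y p := jacobiSym.mod_left' h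

lemma flcSign_congr {p : ℕ} {x y : ℤ} (h : x ≡ y [ZMOD (p : ℤ)]) :
    flcSign p x = flcSign p y := by
  simp only [flcSign, jacobiSym_congr h]

lemma jacobiSym_eq_zero_of_dvd {p : ℕ} (hp : p.Prime) {z : ℤ} (h : (p : ℤ) ∣ z) :
    jacobiSym z p = 0 := by
  have hz : z ≡ 0 [ZMOD (p : ℤ)] := Int.modEq_zero_iff_dvd.2 h
  rw [jacobiSym_congr hz]
  exact jacobiSym.zero_left hp.one_lt

/-- The contributions of an edge to `e(1)` and to `e(0)` differ by its signed label. -/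
lemma label_indicator_sub {p : ℕ} (hp : p.Prime) (a b : ℤ) (x y : ℕ) :
    ((if flcEdgeLabel a b p s(x, y) = 1 then 1 else 0 : ℤ)
      - (if flcEdgeLabel a b p s(x, y) = 0 then 1 else 0))
      = flcSign p (fibAB a b x + fibAB a b y) := by
  have hl : flcEdgeLabel a b p s(x, y)
      = if (p : ℤ) ∣ (fibAB a b x + fibAB a b y) then 0
        else (1 + jacobiSym (fibAB a b x + fibAB a b y) p).toNat / 2 := rfl
  rw [hl, flcSign]
  by_cases hd : (p : ℤ) ∣ (fibAB a b x + fibAB a b y)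
  · simp [hd, jacobiSym_eq_zero_of_dvd hp hd]
  · rcases jacobiSym.trichotomy (fibAB a b x + fibAB a b y) p with h | h | h <;>
      simp [hd, h]

/-- Twice `e(1) - e(0)`, as a sum of signed labels over ordered adjacent pairs. -/
lemma two_mul_flcCount_sub {W : Type*} [Fintype W] (G : SimpleGraph W)
    [DecidableRel G.Adj] {p : ℕ} (hp : p.Prime) (a b : ℤ) (f : W → ℕ) :
    2 * ((flcCount G a b p f 1 : ℤ) - (flcCount G a b p f 0 : ℤ))
      = ∑ x : W × W, (if G.Adj x.1 x.2 then
          flcSign p (fibAB a b (f x.1) + fibAB a b (f x.2)) else 0) := by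
  classical
  have hcount : ∀ i, (flcCount G a b p f i : ℤ)
      = ∑ e ∈ G.edgeFinset, if flcEdgeLabel a b p (e.map f) = i then 1 else 0 := by
    intro i
    have hset : {e ∈ G.edgeSet | flcEdgeLabel a b p (e.map f) = i}
        = ((G.edgeFinset.filter fun e => flcEdgeLabel a b p (e.map f) = i :
            Finset (Sym2 W)) : Set (Sym2 W)) := by
      ext e
      simp
    rw [flcCount, hset, Set.ncard_coe_finset, Finset.sum_boole]
  rw [hcount, hcount, ← Finset.sum_sub_distrib, ← sum_adj_eq_two_mul_sum_edges G
    (fun e => (if flcEdgeLabel a b p (e.map f) = 1 then 1 else 0 : ℤ)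
      - (if flcEdgeLabel a b p (e.map f) = 0 then 1 else 0))]
  refine Finset.sum_congr rfl fun x _ => ?_
  rw [Sym2.map_mk, label_indicator_sub hp]

/-! ### Adjacency in the cycle and in the lexicographic product -/

/-- From three vertices on, the neighbours in the cycle are the cyclic successor and predecessor. -/
lemma cycleG_adj (M : ℕ) (i j : Fin (M + 3)) :
    (cycleG (M + 3)).Adj i j ↔ j = i + 1 ∨ i = j + 1 := by
  simp only [cycleG, SimpleGraph.fromRel_adj, ne_eq, Fin.ext_iff, Fin.val_add_one, Fin.val_last]
  have := i.isLt
  have := j.isLt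
  split_ifs <;> omega

lemma lexProd_adj {α β : Type*} (G : SimpleGraph α) (H : SimpleGraph β) (x y : α × β) :
    (lexProd G H).Adj x y ↔ G.Adj x.1 y.1 ∨ (x.1 = y.1 ∧ H.Adj x.2 y.2) := by
  simp only [lexProd, SimpleGraph.fromRel_adj]
  constructor
  · rintro ⟨-, h | h | ⟨h1, h2⟩⟩
    · exact h
    · exact Or.inl h.symm
    · exact Or.inr ⟨h1.symm, h2.symm⟩
  · intro h
    refine ⟨?_, Or.inl h⟩
    rintro rfl
    rcases h with h | ⟨-, h⟩
    · exact h.ne rfl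
    · exact h.ne rfl

/-- A sum over ordered adjacent pairs of `C_{M+3} ⊗ G` whose summand ignores the `G`-coordinates
vanishes once the diagonal sum and the sum along the cycle do. -/
lemma sum_lexProd_cycle_eq_zero (M : ℕ) {V : Type*} [Fintype V] (G : SimpleGraph V)
    [DecidableRel (lexProd (cycleG (M + 3)) G).Adj]
    (g : Fin (M + 3) → Fin (M + 3) → ℤ) (hsymm : ∀ i j, g i j = g j i)
    (hdiag : ∑ i, g i i = 0) (hcyc : ∑ i, g i (i + 1) = 0) :
    ∑ x : (Fin (M + 3) × V) × (Fin (M + 3) × V),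
      (if (lexProd (cycleG (M + 3)) G).Adj x.1 x.2 then g x.1.1 x.2.1 else 0) = 0 := by
  classical
  -- The three families of ordered pairs (forward, backward, inside a copy of `G`) are disjoint.
  have hsplit : ∀ i j u v,
      (if (lexProd (cycleG (M + 3)) G).Adj (i, u) (j, v) then g i j else 0)
        = (if j = i + 1 then g i j else 0) + (if i = j + 1 then g i j else 0)
          + (if i = j then (if G.Adj u v then g i j else 0) else 0) := by
    intro i j u v
    have h1 : ¬ (j = i + 1 ∧ i = j + 1) := by
      simp only [Fin.ext_iff, Fin.val_add_one, Fin.val_last]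
      split_ifs <;> omega
    have h2 : ¬ (i = j ∧ j = i + 1) := by
      simp only [Fin.ext_iff, Fin.val_add_one, Fin.val_last]
      split_ifs <;> omega
    have h3 : ¬ (i = j ∧ i = j + 1) := by
      simp only [Fin.ext_iff, Fin.val_add_one, Fin.val_last]
      split_ifs <;> omega
    simp only [lexProd_adj, cycleG_adj]
    generalize g i j = t
    split_ifs <;> first | (exfalso; tauto) | ring
  have hback : ∑ j, g (j + 1) j = 0 := by
    rw [← hcyc]
    exact Finset.sum_congr rfl fun i _ => hsymm _ _
  have hreorder : ∑ x : (Fin (M + 3) × V) × (Fin (M + 3) × V),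
      (if (lexProd (cycleG (M + 3)) G).Adj x.1 x.2 then g x.1.1 x.2.1 else 0)
      = ∑ u : V, ∑ v : V, ∑ i, ∑ j,
        (if (lexProd (cycleG (M + 3)) G).Adj (i, u) (j, v) then g i j else 0) := by
    refine (Fintype.sum_equiv ((Equiv.prodProdProdComm _ _ _ _).trans (Equiv.prodComm _ _)) _
      (fun y : (V × V) × (Fin (M + 3) × Fin (M + 3)) =>
        if (lexProd (cycleG (M + 3)) G).Adj (y.2.1, y.1.1) (y.2.2, y.1.2) then g y.2.1 y.2.2 else 0)
      (fun _ => rfl)).trans ?_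
    simp only [Fintype.sum_prod_type]
  rw [hreorder]
  refine Finset.sum_eq_zero fun u _ => Finset.sum_eq_zero fun v _ => ?_
  simp only [hsplit, Finset.sum_add_distrib, Finset.sum_ite_eq, Finset.sum_ite_eq',
    Finset.mem_univ, if_true]
  rw [hcyc, Finset.sum_comm]
  simp only [Finset.sum_ite_eq', Finset.mem_univ, if_true]
  rw [hback]
  split_ifs <;> simp [hdiag]

/-! ### Periodic sums and the Pisano period -/

lemma sum_range_mul_periodic (H : ℕ → ℤ) (k q : ℕ) (hper : ∀ n, H (n + k) = H n)
    (h0 : ∑ i ∈ Finset.range k, H i = 0) : ∑ i ∈ Finset.range (q * k), H i = 0 := by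
  induction q with
  | zero => simp
  | succ q ih =>
    have hq : ∀ n, H (q * k + n) = H n := by
      intro n
      have : Function.Periodic H k := hper
      rw [add_comm]
      simpa using this.nat_mul q n
    rw [Nat.succ_mul, Finset.sum_range_add, ih, zero_add, ← h0]
    exact Finset.sum_congr rfl fun i _ => hq i

lemma sum_range_shift_two (H : ℕ → ℤ) (N : ℕ) (hper : ∀ n, H (n + N) = H n) :
    ∑ i ∈ Finset.range N, H (i + 2) = ∑ i ∈ Finset.range N, H i := by
  have h1 := Finset.sum_range_succ' H N
  rw [Finset.sum_range_succ] at h1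
  have h2 := Finset.sum_range_succ' (fun i => H (i + 1)) N
  rw [Finset.sum_range_succ] at h2
  have e1 := hper 0
  have e2 := hper 1
  rw [add_comm 1 N] at e2
  rw [zero_add] at e1
  simp only [add_assoc, zero_add, Nat.reduceAdd] at h2
  linarith

lemma pisano_spec {a b : ℤ} {p : ℕ} (h : 0 < pisanoAB a b p) (n : ℕ) :
    fibAB a b (n + pisanoAB a b p) ≡ fibAB a b n [ZMOD (p : ℤ)] := by
  have hne := Nat.nonempty_of_pos_sInf h
  exact (Nat.sInf_mem hne).2 n

lemma fibAB_congr_add_mul {a b : ℤ} {p : ℕ} (h : 0 < pisanoAB a b p) (n q : ℕ) :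
    fibAB a b (n + q * pisanoAB a b p) ≡ fibAB a b n [ZMOD (p : ℤ)] := by
  induction q with
  | zero => simp
  | succ q ih =>
    rw [Nat.succ_mul, ← add_assoc]
    exact (pisano_spec h _).trans ih

/-- For a `0`-PL prime the signed labels of one period cancel. -/
lemma sum_flcSign_period {a b : ℤ} {p : ℕ} (hPL : IsPLPrime a b p 0) :
    ∑ i ∈ Finset.range (pisanoAB a b p), flcSign p (fibAB a b i) = 0 := by
  rw [IsPLPrime] at hPL
  rw [hPL]
  simp only [LambdaSet, Finset.card_filter, Nat.cast_sum]
  rw [← Finset.sum_sub_distrib, ← Finset.sum_sub_distrib]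
  refine Finset.sum_congr rfl fun i _ => ?_
  rcases jacobiSym.trichotomy (fibAB a b i) p with h | h | h <;> simp [flcSign, h]

/-- A period `1` or `2` forces the sequence to vanish modulo `p`, so every index of the period
lies in `Λ₀` and the prime is not `0`-PL. -/
lemma three_le_pisano {a b : ℤ} {p : ℕ} (hp : p.Prime) (hPL : IsPLPrime a b p 0)
    (h : 0 < pisanoAB a b p) : 3 ≤ pisanoAB a b p := by
  by_contra hlt
  have h0 := fibAB_congr_add_mul h 0
  have h1 := fibAB_congr_add_mul h 1
  have hk : pisanoAB a b p = 1 ∨ pisanoAB a b p = 2 := by omega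
  -- In both cases `2` is a multiple of the period.
  have h02 : a + b ≡ a [ZMOD (p : ℤ)] := by
    rcases hk with hk | hk
    · simpa [hk, fibAB] using h0 2
    · simpa [hk, fibAB] using h0 1
  have h13 : b + (a + b) ≡ b [ZMOD (p : ℤ)] := by
    rcases hk with hk | hk
    · simpa [hk, fibAB] using h1 2
    · simpa [hk, fibAB] using h1 1
  have hb : (p : ℤ) ∣ b := by simpa using h02.symm.dvd
  have hab : (p : ℤ) ∣ a + b := by simpa using h13.symm.dvd
  have ha : (p : ℤ) ∣ a := by simpa using dvd_sub hab hb
  have hall : ∀ n, (p : ℤ) ∣ fibAB a b n ∧ (p : ℤ) ∣ fibAB a b (n + 1) := by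
    intro n
    induction n with
    | zero => exact ⟨ha, hb⟩
    | succ n ih => exact ⟨ih.2, dvd_add ih.1 ih.2⟩
  have hs := sum_flcSign_period hPL
  have hconst : ∀ i, flcSign p (fibAB a b i) = -1 := by
    intro i
    simp [flcSign, jacobiSym_eq_zero_of_dvd hp (hall i).1]
  simp only [hconst, Finset.sum_const, Finset.card_range, nsmul_eq_mul] at hs
  omega

/-- For `p ≡ ±1 (mod 8)`, `2` is a square modulo `p`, so doubling preserves the signed label. -/
lemma flcSign_double {p : ℕ} (hodd : Odd p) (h8 : p % 8 = 1 ∨ p % 8 = 7) (z : ℤ) :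
    flcSign p (z + z) = flcSign p z := by
  have h2 : jacobiSym 2 p = 1 := by
    rw [jacobiSym.at_two hodd, ZMod.χ₈_nat_eq_if_mod_eight]
    rcases h8 with h | h
    · rw [if_neg (by omega), if_pos (Or.inl h)]
    · rw [if_neg (by omega), if_pos (Or.inr h)]
  rw [flcSign, ← two_mul, jacobiSym.mul_left, h2, one_mul, flcSign]

/-- For `(a,b) ≠ (0,0)`, an odd prime `p ≡ ±1 (mod 8)` that is a
`0`-PL prime relative to `(a,b)`, `q ≥ 1`, and a connected graph `G`, the
lexicographic product `C_{q·π_p(a,b)} ⊗ G` is an `(a,b)`-FLC graph modulo `p`. -/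
theorem lexProd_cycle_isFLCGraph (a b : ℤ) (hab : (a, b) ≠ (0, 0)) (p : ℕ)
    (hp : p.Prime) (hodd : Odd p) (hPL : IsPLPrime a b p 0)
    (h8 : p % 8 = 1 ∨ p % 8 = 7) (q : ℕ) (hq : 1 ≤ q)
    {V : Type} [Fintype V] (G : SimpleGraph V) (hG : G.Connected) :
    IsFLCGraph (lexProd (cycleG (q * pisanoAB a b p)) G) a b p := by
  classical
  rcases Nat.eq_zero_or_pos (pisanoAB a b p) with hz | hpos
  · -- The defining set of the Pisano period being empty would give an empty graph.
    have : IsEmpty (Fin (q * pisanoAB a b p) × V) := by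
      rw [hz]
      simp only [Nat.mul_zero]
      infer_instance
    refine ⟨Fintype.equivFin _, ?_⟩
    have h := two_mul_flcCount_sub (lexProd (cycleG (q * pisanoAB a b p)) G) hp a b
      (fun v => ((Fintype.equivFin _ v : Fin _) : ℕ))
    rw [Finset.univ_eq_empty, Finset.sum_empty] at h
    rw [abs_le]
    constructor <;> linarith
  have h3 := three_le_pisano hp hPL hpos
  have hper := fun n => fibAB_congr_add_mul (a := a) (b := b) hpos n q
  have hsum := sum_range_mul_periodic (fun n => flcSign p (fibAB a b n)) (pisanoAB a b p) q
    (fun n => flcSign_congr (pisano_spec hpos n)) (sum_flcSign_period hPL)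
  have hN : 3 ≤ q * pisanoAB a b p := h3.trans (Nat.le_mul_of_pos_left _ hq)
  generalize q * pisanoAB a b p = N at hper hsum hN ⊢
  obtain ⟨M, rfl⟩ : ∃ M, N = M + 3 := ⟨N - 3, by omega⟩
  -- The vertex `(i, v)` is labelled `i + N * (index of v)`, which is `i` modulo the period.
  let f : Fin (M + 3) × V ≃ Fin (Fintype.card (Fin (M + 3) × V)) :=
    (Equiv.prodComm _ _).trans
      (((Fintype.equivFin V).prodCongr (Equiv.refl _)).trans
        (finProdFinEquiv.trans (finCongr (by simp [mul_comm]))))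
  have hf : ∀ x, ((f x : Fin _) : ℕ) = (x.1 : ℕ) + (M + 3) * (Fintype.equivFin V x.2 : ℕ) := by
    intro x
    simp [f]
  have hF : ∀ x, fibAB a b (f x : ℕ) ≡ fibAB a b (x.1 : ℕ) [ZMOD (p : ℤ)] := by
    intro x
    rw [hf]
    generalize (Fintype.equivFin V x.2 : ℕ) = k
    induction k with
    | zero => simp
    | succ k ih =>
      rw [Nat.mul_succ, ← add_assoc]
      exact (hper _).trans ih
  refine ⟨f, ?_⟩
  have h := two_mul_flcCount_sub (lexProd (cycleG (M + 3)) G) hp a b (fun v => (f v : ℕ))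
  have hzero : ∑ x : (Fin (M + 3) × V) × (Fin (M + 3) × V),
      (if (lexProd (cycleG (M + 3)) G).Adj x.1 x.2 then
        flcSign p (fibAB a b (f x.1 : ℕ) + fibAB a b (f x.2 : ℕ)) else 0) = 0 := by
    refine Eq.trans ?_ (sum_lexProd_cycle_eq_zero M G
      (fun i j => flcSign p (fibAB a b (i : ℕ) + fibAB a b (j : ℕ)))
      (fun i j => by rw [add_comm]) ?_ ?_)
    · refine Finset.sum_congr rfl fun x _ => ?_
      rw [flcSign_congr ((hF x.1).add (hF x.2))]
    · simp only [flcSign_double hodd h8]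
      rw [Fin.sum_univ_eq_sum_range (fun n => flcSign p (fibAB a b n)), hsum]
    · have hstep : ∀ i : Fin (M + 3),
          flcSign p (fibAB a b (i : ℕ) + fibAB a b ((i + 1 : Fin (M + 3)) : ℕ))
            = flcSign p (fibAB a b ((i : ℕ) + 2)) := by
        intro i
        refine flcSign_congr ?_
        rw [fibAB]
        refine Int.ModEq.add_left _ ?_
        rw [Fin.val_add_one]
        split_ifs with hi
        · -- The closing edge of the cycle wraps around to index `0`.
          have := hper 0
          rw [zero_add] at this
          rw [hi, Fin.val_last]
          exact this.symm
        · rfl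
      simp only [hstep]
      rw [Fin.sum_univ_eq_sum_range (fun n => flcSign p (fibAB a b (n + 2))),
        sum_range_shift_two (fun n => flcSign p (fibAB a b n)) _
          (fun n => flcSign_congr (hper n)), hsum]
  rw [hzero] at h
  rw [abs_le]
  constructor <;> linarith
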